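/- Let 𝓕 be a uniformly Lipschitz family of maps between metric spaces with λ = sup_{F∈𝓕} Lip(F) ∈ (0,∞). Let l, m ∈ ℕ with m > l, and write m = kl + r where k ∈ ℕ and 0 ≤ r < l. Then a_m(𝓕) ≤ a_l(𝓕)·m/(lk) + 2λr/m. -/

import Mathlib

/-!
With the unnormalized Hamming distance in place of `∂`, the best constant becomes `n * a_n(𝓕)`, and
this sequence is subadditive: splitting `2^(p+q) = 2^p × 2^q`, go from `(x, y)` to `(-x, -y)`
through `(-x, y)`. The first step stays in a copy of `2^p`, the second in a copy of `2^q`, and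
restricting `f` to such a copy preserves its unnormalized Lipschitz bound. Together with
`r * a_r(𝓕) ≤ λ * r` this gives `m * a_m(𝓕) ≤ k * (l * a_l(𝓕)) + λ * r` for `m = k * l + r`, which
is sharper than the claim because `l * k / m ≤ 1 ≤ m / (l * k)`.
-/

open Finset

noncomputable section

/-- Normalized Hamming distance on the cube `{±1}^n` (modeled as `Fin n → Bool`). -/
def hdist (n : ℕ) (ε δ : Fin n → Bool) : ℝ :=
  ((Finset.univ.filter fun i => ε i ≠ δ i).card : ℝ) / n

/-- `-ε`: flip all coordinates. -/
def negCube {n : ℕ} (ε : Fin n → Bool) : Fin n → Bool := fun i => !(ε i)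

/-- `d_i ε`: flip the `i`-th coordinate. -/
def flipCoord {n : ℕ} (i : Fin n) (ε : Fin n → Bool) : Fin n → Bool :=
  Function.update ε i (!(ε i))

/-- Expectation with respect to the uniform probability measure on the cube. -/
def cubeE (n : ℕ) (Φ : (Fin n → Bool) → ℝ) : ℝ :=
  (∑ ε : Fin n → Bool, Φ ε) / 2 ^ n

/-- Lipschitz constant of a map from the cube (with metric `hdist`) into a metric space,
with the convention `0 / 0 = 0`. -/
def cubeLip {n : ℕ} {X : Type} [MetricSpace X] (f : (Fin n → Bool) → X) : ℝ :=
  sSup { r : ℝ | ∃ ε δ, r = dist (f ε) (f δ) / hdist n ε δ }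

/-- A map between (bundled) metric spaces. -/
structure MetricMap where
  X : Type
  Y : Type
  mX : MetricSpace X
  mY : MetricSpace Y
  F : X → Y

attribute [instance] MetricMap.mX MetricMap.mY

/-- `a_n(𝓕)`: infimum of those `a > 0` such that for each `F : X → Y` in `𝓕` and each
`f : 2^n → X`, `𝔼 ϱ_Y^f(ε,−ε) ≤ a·Lip(f)`. -/
def aConst (𝓕 : Set MetricMap) (n : ℕ) : ℝ :=
  sInf { a : ℝ | 0 < a ∧ ∀ G ∈ 𝓕, ∀ f : (Fin n → Bool) → G.X,
    cubeE n (fun ε => dist (G.F (f ε)) (G.F (f (negCube ε)))) ≤ a * cubeLip f }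

/-- `b_{p,n}(𝓕)`: infimum of those `b > 0` such that for each `F : X → Y` in `𝓕` and each
`f : 2^n → X`, `𝔼 ϱ_Y^f(ε,−ε)^p ≤ b^p n^{p−1} ∑_i 𝔼 ϱ_X^f(ε,d_iε)^p`. -/
def bConst (𝓕 : Set MetricMap) (p : ℝ) (n : ℕ) : ℝ :=
  sInf { b : ℝ | 0 < b ∧ ∀ G ∈ 𝓕, ∀ f : (Fin n → Bool) → G.X,
    cubeE n (fun ε => dist (G.F (f ε)) (G.F (f (negCube ε))) ^ p)
      ≤ b ^ p * (n : ℝ) ^ (p - 1) *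
        ∑ i : Fin n, cubeE n (fun ε => dist (f ε) (f (flipCoord i ε)) ^ p) }

lemma hammingDist_append {α : Type*} [DecidableEq α] {p q : ℕ} (x x' : Fin p → α)
    (y y' : Fin q → α) :
    hammingDist (Fin.append x y) (Fin.append x' y') = hammingDist x x' + hammingDist y y' := by
  simp [hammingDist, Finset.card_filter, Fin.sum_univ_add]

lemma negCube_append {p q : ℕ} (x : Fin p → Bool) (y : Fin q → Bool) :
    negCube (Fin.append x y) = Fin.append (negCube x) (negCube y) := by
  ext i
  refine Fin.addCases (fun j => ?_) (fun j => ?_) i <;> simp [negCube]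

lemma hammingDist_negCube {n : ℕ} (ε : Fin n → Bool) : hammingDist ε (negCube ε) = n := by
  simp [hammingDist, negCube]

section Expectation

variable {n p q : ℕ}

lemma cubeE_mono {Φ Ψ : (Fin n → Bool) → ℝ} (h : ∀ ε, Φ ε ≤ Ψ ε) : cubeE n Φ ≤ cubeE n Ψ := by
  unfold cubeE
  gcongr
  exact h _

lemma cubeE_const (c : ℝ) : cubeE n (fun _ => c) = c := by
  simp [cubeE]

lemma cubeE_le_of_forall_le {Φ : (Fin n → Bool) → ℝ} {c : ℝ} (h : ∀ ε, Φ ε ≤ c) :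
    cubeE n Φ ≤ c :=
  (cubeE_mono h).trans_eq (cubeE_const c)

lemma cubeE_add (Φ Ψ : (Fin n → Bool) → ℝ) :
    cubeE n (fun ε => Φ ε + Ψ ε) = cubeE n Φ + cubeE n Ψ := by
  simp only [cubeE, Finset.sum_add_distrib, add_div]

lemma cubeE_comm (Φ : (Fin p → Bool) → (Fin q → Bool) → ℝ) :
    cubeE p (fun x => cubeE q (Φ x)) = cubeE q (fun y => cubeE p (fun x => Φ x y)) := by
  simp only [cubeE, ← Finset.sum_div]
  rw [Finset.sum_comm, div_right_comm]

lemma cubeE_append (Φ : (Fin (p + q) → Bool) → ℝ) :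
    cubeE (p + q) Φ = cubeE p (fun x => cubeE q (fun y => Φ (Fin.append x y))) := by
  simp only [cubeE, ← Finset.sum_div, ← Fintype.sum_prod_type', div_div]
  rw [← (Fin.appendEquiv p q).sum_comp, ← pow_add, add_comm q p]
  rfl

end Expectation

section Lipschitz

variable {n : ℕ} {X : Type} [MetricSpace X] {f : (Fin n → Bool) → X}

lemma natCast_mul_hdist (ε δ : Fin n → Bool) : n * hdist n ε δ = hammingDist ε δ :=
  mul_div_cancel_of_imp' fun hn => by
    obtain rfl : n = 0 := Nat.cast_eq_zero.mp hn
    simp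

lemma hdist_nonneg (ε δ : Fin n → Bool) : 0 ≤ hdist n ε δ := by
  unfold hdist
  positivity

lemma hdist_pos {ε δ : Fin n → Bool} (h : ε ≠ δ) : 0 < hdist n ε δ := by
  refine pos_of_mul_pos_right ?_ n.cast_nonneg
  rw [natCast_mul_hdist]
  exact_mod_cast hammingDist_pos.mpr h

lemma cubeLip_nonneg (f : (Fin n → Bool) → X) : 0 ≤ cubeLip f := by
  refine Real.sSup_nonneg ?_
  rintro _ ⟨ε, δ, rfl⟩
  exact div_nonneg dist_nonneg (hdist_nonneg ε δ)

lemma dist_le_cubeLip_mul_hdist (f : (Fin n → Bool) → X) (ε δ : Fin n → Bool) :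
    dist (f ε) (f δ) ≤ cubeLip f * hdist n ε δ := by
  obtain rfl | hne := eq_or_ne ε δ
  · simpa using mul_nonneg (cubeLip_nonneg f) (hdist_nonneg ε ε)
  · rw [← div_le_iff₀ (hdist_pos hne)]
    refine le_csSup (Set.Finite.bddAbove ?_) ⟨ε, δ, rfl⟩
    refine (Set.finite_range fun z : (Fin n → Bool) × (Fin n → Bool) =>
      dist (f z.1) (f z.2) / hdist n z.1 z.2).subset ?_
    rintro _ ⟨ε', δ', rfl⟩
    exact ⟨(ε', δ'), rfl⟩

lemma dist_le_cubeLip_div_mul_hammingDist (f : (Fin n → Bool) → X) (ε δ : Fin n → Bool) :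
    dist (f ε) (f δ) ≤ cubeLip f / n * hammingDist ε δ :=
  (dist_le_cubeLip_mul_hdist f ε δ).trans_eq (mul_comm_div _ _ _).symm

lemma cubeLip_le_of_dist_le_mul_hammingDist {L : ℝ} (hL : 0 ≤ L)
    (hf : ∀ ε δ, dist (f ε) (f δ) ≤ L * hammingDist ε δ) : cubeLip f ≤ n * L := by
  have hnL : 0 ≤ n * L := by positivity
  refine Real.sSup_le ?_ hnL
  rintro _ ⟨ε, δ, rfl⟩
  refine div_le_of_le_mul₀ (hdist_nonneg ε δ) hnL ?_
  calc dist (f ε) (f δ) ≤ L * hammingDist ε δ := hf ε δ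
    _ = n * L * hdist n ε δ := by rw [← natCast_mul_hdist]; ring

end Lipschitz

/-- `A` bounds the mean displacement `𝔼 ϱ_Y^f(ε,−ε)` per unit of the Lipschitz constant of `f`, for
each `F` in `𝓕`. Here `f` is Lipschitz for the *unnormalized* Hamming distance, so that `n * a` is
such a bound exactly when `a` is admissible in the definition of `a_n(𝓕)`. -/
def IsAntipodalBound (𝓕 : Set MetricMap) (n : ℕ) (A : ℝ) : Prop :=
  ∀ G ∈ 𝓕, ∀ (f : (Fin n → Bool) → G.X) (L : ℝ), 0 ≤ L →
    (∀ ε δ, dist (f ε) (f δ) ≤ L * hammingDist ε δ) →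
    cubeE n (fun ε => dist (G.F (f ε)) (G.F (f (negCube ε)))) ≤ A * L

section AntipodalBound

variable {𝓕 : Set MetricMap} {n p q : ℕ} {A B a lam : ℝ}

lemma IsAntipodalBound.mono (h : IsAntipodalBound 𝓕 n A) (hAB : A ≤ B) :
    IsAntipodalBound 𝓕 n B :=
  fun G hG f L hL hf => (h G hG f L hL hf).trans (mul_le_mul_of_nonneg_right hAB hL)

lemma isAntipodalBound_natCast_mul_iff (ha : 0 ≤ a) :
    IsAntipodalBound 𝓕 n (n * a) ↔ ∀ G ∈ 𝓕, ∀ f : (Fin n → Bool) → G.X,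
      cubeE n (fun ε => dist (G.F (f ε)) (G.F (f (negCube ε)))) ≤ a * cubeLip f := by
  refine ⟨fun h G hG f => ?_, fun h G hG f L hL hf => ?_⟩
  · have hf : 0 ≤ cubeLip f := cubeLip_nonneg f
    calc cubeE n (fun ε => dist (G.F (f ε)) (G.F (f (negCube ε))))
        ≤ n * a * (cubeLip f / n) :=
          h G hG f _ (by positivity) (dist_le_cubeLip_div_mul_hammingDist f)
      _ = a * cubeLip f * (n / n) := by ring
      _ ≤ a * cubeLip f := mul_le_of_le_one_right (by positivity) (div_self_le_one _)
  · calc cubeE n (fun ε => dist (G.F (f ε)) (G.F (f (negCube ε))))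
        ≤ a * cubeLip f := h G hG f
      _ ≤ a * (n * L) := by gcongr; exact cubeLip_le_of_dist_le_mul_hammingDist hL hf
      _ = n * a * L := by ring

lemma aConst_eq_sInf_isAntipodalBound :
    aConst 𝓕 n = sInf {a : ℝ | 0 < a ∧ IsAntipodalBound 𝓕 n (n * a)} :=
  congrArg sInf <| Set.ext fun _ =>
    and_congr_right fun ha => (isAntipodalBound_natCast_mul_iff ha.le).symm

lemma aConst_nonneg : 0 ≤ aConst 𝓕 n :=
  Real.sInf_nonneg fun _ ha => ha.1.le

lemma IsAntipodalBound.mul_aConst_le (h : IsAntipodalBound 𝓕 n A) (hA : 0 ≤ A) :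
    n * aConst 𝓕 n ≤ A := by
  obtain rfl | hn := n.eq_zero_or_pos
  · simpa using hA
  have hn' : (0 : ℝ) < n := mod_cast hn
  rw [← le_div_iff₀' hn', aConst_eq_sInf_isAntipodalBound]
  -- `A / n` itself may be `0`, whereas admissible constants are positive.
  refine le_of_forall_gt_imp_ge_of_dense fun a ha => csInf_le ⟨0, fun _ hb => hb.1.le⟩ ⟨?_, ?_⟩
  · exact (div_nonneg hA hn'.le).trans_lt ha
  · exact h.mono ((div_lt_iff₀' hn').mp ha).le

lemma IsAntipodalBound.natCast_mul_aConst (ha : 0 < a) (h : IsAntipodalBound 𝓕 n (n * a)) :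
    IsAntipodalBound 𝓕 n (n * aConst 𝓕 n) := by
  intro G hG f L hL hf
  have hclosed : IsClosed {b : ℝ |
      cubeE n (fun ε => dist (G.F (f ε)) (G.F (f (negCube ε)))) ≤ n * b * L} :=
    isClosed_le continuous_const (by fun_prop)
  have hmem := csInf_mem_closure (s := {b : ℝ | 0 < b ∧ IsAntipodalBound 𝓕 n (n * b)})
    ⟨a, ha, h⟩ ⟨0, fun _ hb => hb.1.le⟩
  rw [← aConst_eq_sInf_isAntipodalBound] at hmem
  exact closure_minimal (fun b hb => hb.2 G hG f L hL hf) hclosed hmem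

lemma isAntipodalBound_of_lipschitz (hlam : 0 ≤ lam)
    (hLip : ∀ G ∈ 𝓕, ∀ x y : G.X, dist (G.F x) (G.F y) ≤ lam * dist x y) (n : ℕ) :
    IsAntipodalBound 𝓕 n (n * lam) := by
  intro G hG f L _ hf
  refine cubeE_le_of_forall_le fun ε => ?_
  calc dist (G.F (f ε)) (G.F (f (negCube ε)))
      ≤ lam * dist (f ε) (f (negCube ε)) := hLip G hG _ _
    _ ≤ lam * (L * hammingDist ε (negCube ε)) := by gcongr; exact hf _ _
    _ = n * lam * L := by rw [hammingDist_negCube]; ring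

lemma IsAntipodalBound.add (hp : IsAntipodalBound 𝓕 p A) (hq : IsAntipodalBound 𝓕 q B) :
    IsAntipodalBound 𝓕 (p + q) (A + B) := by
  intro G hG f L hL hf
  let g (x : Fin p → Bool) (y : Fin q → Bool) : G.X := f (Fin.append x y)
  have hleft (y) : cubeE p (fun x => dist (G.F (g x y)) (G.F (g (negCube x) y))) ≤ A * L :=
    hp G hG (g · y) L hL fun x x' => by
      simpa [hammingDist_append] using hf (Fin.append x y) (Fin.append x' y)
  have hright (x) :
      cubeE q (fun y => dist (G.F (g (negCube x) y)) (G.F (g (negCube x) (negCube y)))) ≤ B * L :=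
    hq G hG (g (negCube x)) L hL fun y y' => by
      simpa [hammingDist_append] using
        hf (Fin.append (negCube x) y) (Fin.append (negCube x) y')
  calc cubeE (p + q) (fun ε => dist (G.F (f ε)) (G.F (f (negCube ε))))
      = cubeE p (fun x => cubeE q (fun y =>
          dist (G.F (g x y)) (G.F (g (negCube x) (negCube y))))) := by
        simp only [cubeE_append, negCube_append, g]
    _ ≤ cubeE p (fun x => cubeE q (fun y => dist (G.F (g x y)) (G.F (g (negCube x) y)) +
          dist (G.F (g (negCube x) y)) (G.F (g (negCube x) (negCube y))))) :=
        cubeE_mono fun x => cubeE_mono fun y => dist_triangle _ _ _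
    _ = cubeE q (fun y => cubeE p (fun x => dist (G.F (g x y)) (G.F (g (negCube x) y)))) +
          cubeE p (fun x => cubeE q (fun y =>
            dist (G.F (g (negCube x) y)) (G.F (g (negCube x) (negCube y))))) := by
        simp only [cubeE_add]
        rw [cubeE_comm]
    _ ≤ A * L + B * L :=
        add_le_add (cubeE_le_of_forall_le hleft) (cubeE_le_of_forall_le hright)
    _ = (A + B) * L := (add_mul A B L).symm

lemma subadditive_natCast_mul_aConst (hlam : 0 ≤ lam)
    (hLip : ∀ G ∈ 𝓕, ∀ x y : G.X, dist (G.F x) (G.F y) ≤ lam * dist x y) :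
    Subadditive fun n => n * aConst 𝓕 n := by
  have hbound (n : ℕ) : IsAntipodalBound 𝓕 n (n * aConst 𝓕 n) := by
    refine .natCast_mul_aConst (add_pos_of_nonneg_of_pos hlam one_pos) ?_
    refine (isAntipodalBound_of_lipschitz hlam hLip n).mono ?_
    gcongr
    exact le_add_of_nonneg_right zero_le_one
  have hnonneg (n : ℕ) : 0 ≤ n * aConst 𝓕 n := mul_nonneg n.cast_nonneg aConst_nonneg
  exact fun p q => ((hbound p).add (hbound q)).mul_aConst_le (add_nonneg (hnonneg p) (hnonneg q))

end AntipodalBound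

lemma mul_div_add_div_le_of_le {a b c s t : ℝ} (ha : 0 ≤ a) (hbc : 0 ≤ b * c) (hs : 0 < s)
    (hst : s ≤ t) : a * (s / t) + b * c / t ≤ a * t / s + 2 * b * c / t := by
  have ht : 0 < t := hs.trans_le hst
  rw [mul_div_assoc a]
  gcongr ?_ + ?_ / t
  · gcongr a * ?_
    exact ((div_le_one ht).mpr hst).trans ((one_le_div hs).mpr hst)
  · linarith

theorem aConst_almost_monotone_general (𝓕 : Set MetricMap) {lam : ℝ} (hlam : 0 ≤ lam)
    (hLip : ∀ G ∈ 𝓕, ∀ x y : G.X, dist (G.F x) (G.F y) ≤ lam * dist x y)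
    {l m k r : ℕ} (hm₀ : 0 < m) (hm : m = k * l + r) :
    aConst 𝓕 m ≤ aConst 𝓕 l * (l * k / m) + lam * r / m := by
  have hm' : (0 : ℝ) < m := mod_cast hm₀
  have hmul : m * aConst 𝓕 m ≤ aConst 𝓕 l * (l * k) + lam * r :=
    calc m * aConst 𝓕 m ≤ k * (l * aConst 𝓕 l) + r * aConst 𝓕 r := by
          rw [hm]
          exact (subadditive_natCast_mul_aConst hlam hLip).apply_mul_add_le k l r
      _ ≤ k * (l * aConst 𝓕 l) + r * lam := by
          gcongr k * (l * aConst 𝓕 l) + ?_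
          exact (isAntipodalBound_of_lipschitz hlam hLip r).mul_aConst_le (by positivity)
      _ = aConst 𝓕 l * (l * k) + lam * r := by ring
  calc aConst 𝓕 m ≤ (aConst 𝓕 l * (l * k) + lam * r) / m := (le_div_iff₀' hm').mpr hmul
    _ = aConst 𝓕 l * (l * k / m) + lam * r / m := by rw [add_div, mul_div_assoc]

/-- Almost-monotonicity of `a_m(𝓕)`: if `m = kl + r` with `0 ≤ r < l` and `m > l`, then
`a_m(𝓕) ≤ a_l(𝓕)·m/(lk) + 2λr/m`. -/
theorem aConst_almost_monotone (𝓕 : Set MetricMap) (lam : ℝ) (hlam : 0 < lam)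
    (hLip : ∀ G ∈ 𝓕, ∀ x y : G.X, dist (G.F x) (G.F y) ≤ lam * dist x y)
    (l m k r : ℕ) (hl : 0 < l) (hlm : l < m) (hm : m = k * l + r) (hr : r < l) :
    aConst 𝓕 m ≤ aConst 𝓕 l * m / (l * k) + 2 * lam * r / m := by
  have hk : 0 < k := Nat.pos_of_ne_zero (by rintro rfl; lia)
  have hlkm : l * k ≤ m := by lia
  exact (aConst_almost_monotone_general 𝓕 hlam.le hLip (hl.trans hlm) hm).trans <|
    mul_div_add_div_le_of_le aConst_nonneg (by positivity) (by positivity) (mod_cast hlkm)
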